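/- For every integer n > 2^15 = 32768, every positive integer N, and every n-linear form U : (ℂ^N)^n → ℂ, one has (∑_{i₁,…,iₙ=1}^N |U(e_{i₁},…,e_{iₙ})|^{2n/(n+1)})^{(n+1)/(2n)} ≤ 0.99136434217 · (n-1)^{0.304975} · ‖U‖. -/

import Mathlib

open Real

/-- The Bohnenblust--Hille quantity of an `n`-linear form on `ℓ_∞^N` over `ℂ`:
`(∑_{i₁,…,iₙ} |U(e_{i₁},…,e_{iₙ})|^{2n/(n+1)})^{(n+1)/(2n)}`. -/
noncomputable def BHcomplex (n N : ℕ)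
    (U : ContinuousMultilinearMap ℂ (fun _ : Fin n => (Fin N → ℂ)) ℂ) : ℝ :=
  (∑ i : Fin n → Fin N,
      ‖U (fun k => Pi.single (i k) (1 : ℂ))‖ ^ ((2 * n : ℝ) / (n + 1)))
    ^ ((n + 1 : ℝ) / (2 * n))


lemma bh_holder {K ι : Type*} [Fintype K] [Fintype ι] (f : K → ι → ℝ) (hf : ∀ k x, 0 ≤ f k x)
    (w : K → ℝ) (hw : ∀ k, 0 < w k) (hs : ∑ k, w k = 1) :
    ∑ x, ∏ k, f k x ^ w k ≤ ∏ k, (∑ x, f k x) ^ w k := by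
  classical
  by_cases h0 : ∃ k, ∑ x, f k x = 0
  · obtain ⟨k, hk⟩ := h0
    have hk' : ∀ x, f k x = 0 := fun x =>
      (Finset.sum_eq_zero_iff_of_nonneg (fun x _ => hf k x)).1 hk x (Finset.mem_univ x)
    have : ∑ x, ∏ k, f k x ^ w k = 0 := by
      refine Finset.sum_eq_zero fun x _ => Finset.prod_eq_zero (Finset.mem_univ k) ?_
      rw [hk', Real.zero_rpow (hw k).ne']
    rw [this]
    exact Finset.prod_nonneg fun k _ => Real.rpow_nonneg (Finset.sum_nonneg fun x _ => hf k x) _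
  · push Not at h0
    have hpos : ∀ k, 0 < ∑ x, f k x := fun k =>
      lt_of_le_of_ne (Finset.sum_nonneg fun x _ => hf k x) (h0 k).symm
    have key : ∀ x, ∏ k, f k x ^ w k ≤
        (∏ k, (∑ x, f k x) ^ w k) * ∑ k, w k * (f k x / ∑ x, f k x) := by
      intro x
      have h1 := Real.geom_mean_le_arith_mean_weighted Finset.univ w
        (fun k => f k x / ∑ x, f k x) (fun k _ => (hw k).le) hs
        (fun k _ => div_nonneg (hf k x) (hpos k).le)
      have h2 : ∏ k, f k x ^ w k = (∏ k, (∑ x, f k x) ^ w k) *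
          ∏ k, (f k x / ∑ x, f k x) ^ w k := by
        rw [← Finset.prod_mul_distrib]
        refine Finset.prod_congr rfl fun k _ => ?_
        rw [← Real.mul_rpow (hpos k).le (div_nonneg (hf k x) (hpos k).le),
          mul_div_cancel₀ _ (hpos k).ne']
      rw [h2]
      exact mul_le_mul_of_nonneg_left h1
        (Finset.prod_nonneg fun k _ => Real.rpow_nonneg (hpos k).le _)
    calc _ ≤ ∑ x, (∏ k, (∑ x, f k x) ^ w k) * ∑ k, w k * (f k x / ∑ x, f k x) :=
          Finset.sum_le_sum fun x _ => key x
      _ = (∏ k, (∑ x, f k x) ^ w k) * 1 := by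
          rw [← Finset.mul_sum, Finset.sum_comm]
          congr 1
          rw [← hs]
          refine Finset.sum_congr rfl fun k _ => ?_
          rw [← Finset.mul_sum, ← Finset.sum_div, div_self (hpos k).ne', mul_one]
      _ = _ := mul_one _

noncomputable def bhNest {N : ℕ} : (n : ℕ) → (Fin n → ℝ) → ((Fin n → Fin N) → ℝ) → ℝ
  | 0, _, a => a Fin.elim0
  | n + 1, e, a => (∑ i, bhNest n (fun j => e j.succ) (fun v => a (Fin.cons i v)) ^ (e 0)) ^ (1 / e 0)

lemma bhNest_nonneg {N : ℕ} (n : ℕ) (e : Fin n → ℝ) (a : (Fin n → Fin N) → ℝ)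
    (ha : ∀ v, 0 ≤ a v) : 0 ≤ bhNest n e a := by
  induction n with
  | zero => exact ha _
  | succ n ih =>
    rw [bhNest]
    exact Real.rpow_nonneg (Finset.sum_nonneg fun i _ => Real.rpow_nonneg (ih _ _ fun v => ha _) _) _

lemma bhNest_holder {N : ℕ} {K : Type*} [Fintype K] (w : K → ℝ) (hw : ∀ k, 0 < w k)
    (hs : ∑ k, w k = 1) (n : ℕ) (e : K → Fin n → ℝ) (he : ∀ k j, 0 < e k j)
    (r : Fin n → ℝ) (hr : ∀ j, 0 < r j) (hre : ∀ j, ∑ k, w k / e k j = 1 / r j)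
    (a : (Fin n → Fin N) → ℝ) (ha : ∀ v, 0 ≤ a v) :
    bhNest n r a ≤ ∏ k, bhNest n (e k) a ^ w k := by
  induction n with
  | zero =>
    simp only [bhNest]
    rw [← Real.rpow_sum_of_nonneg (ha _) (fun k _ => (hw k).le), hs, Real.rpow_one]
  | succ n ih =>
    simp only [bhNest]
    set G : K → Fin N → ℝ := fun k i =>
      bhNest n (fun j => e k j.succ) (fun v => a (Fin.cons i v)) with hG
    have hG0 : ∀ k i, 0 ≤ G k i := fun k i => bhNest_nonneg _ _ _ fun v => ha _
    have h1 : ∀ i, bhNest n (fun j => r j.succ) (fun v => a (Fin.cons i v)) ≤ ∏ k, G k i ^ w k :=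
      fun i => ih (fun k j => e k j.succ) (fun k j => he k _) (fun j => r j.succ) (fun j => hr _)
        (fun j => hre _) _ (fun v => ha _)
    have hr0 := hr 0
    have h2 : ∑ i, bhNest n (fun j => r j.succ) (fun v => a (Fin.cons i v)) ^ r 0 ≤
        ∑ i, ∏ k, (G k i ^ e k 0) ^ (w k * r 0 / e k 0) := by
      refine Finset.sum_le_sum fun i _ => ?_
      refine (Real.rpow_le_rpow (bhNest_nonneg _ _ _ fun v => ha _) (h1 i) hr0.le).trans ?_
      rw [← Real.finsetProd_rpow _ _ (fun k _ => Real.rpow_nonneg (hG0 k i) _)]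
      refine le_of_eq (Finset.prod_congr rfl fun k _ => ?_)
      rw [← Real.rpow_mul (hG0 k i), ← Real.rpow_mul (hG0 k i)]
      congr 1
      have := (he k 0).ne'
      field_simp
    have h3 := bh_holder (fun k i => G k i ^ e k 0) (fun k i => Real.rpow_nonneg (hG0 k i) _)
      (fun k => w k * r 0 / e k 0) (fun k => div_pos (mul_pos (hw k) hr0) (he k 0)) (by
        have := hre 0
        have h4 : ∑ k, w k * r 0 / e k 0 = r 0 * ∑ k, w k / e k 0 := by
          rw [Finset.mul_sum]
          exact Finset.sum_congr rfl fun k _ => by ring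
        rw [h4, this]; field_simp)
    have hl0 : 0 ≤ ∑ i, bhNest n (fun j => r j.succ) (fun v => a (Fin.cons i v)) ^ r 0 :=
      Finset.sum_nonneg fun i _ => Real.rpow_nonneg (bhNest_nonneg _ _ _ fun v => ha _) _
    refine (Real.rpow_le_rpow hl0 (h2.trans h3) (by positivity)).trans ?_
    have hT : ∀ k, 0 ≤ ∑ i, G k i ^ e k 0 := fun k =>
      Finset.sum_nonneg fun i _ => Real.rpow_nonneg (hG0 k i) _
    rw [← Real.finsetProd_rpow _ _ (fun k _ => Real.rpow_nonneg (hT k) _)]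
    refine le_of_eq (Finset.prod_congr rfl fun k _ => ?_)
    rw [← Real.rpow_mul (hT k), ← Real.rpow_mul (hT k)]
    congr 1
    have := (he k 0).ne'
    field_simp

lemma bh_sum_cons {N n : ℕ} (f : (Fin (n+1) → Fin N) → ℝ) :
    ∑ v, f v = ∑ i, ∑ v : Fin n → Fin N, f (Fin.cons i v) := by
  rw [← Fintype.sum_prod_type']
  exact (Equiv.sum_comp (Fin.consEquiv (fun _ => Fin N)) f).symm

lemma bhNest_const {N : ℕ} (r : ℝ) (hr : 0 < r) (n : ℕ) (e : Fin n → ℝ) (he : ∀ j, e j = r)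
    (a : (Fin n → Fin N) → ℝ) (ha : ∀ v, 0 ≤ a v) :
    bhNest n e a = (∑ v, a v ^ r) ^ (1 / r) := by
  induction n with
  | zero =>
    simp only [bhNest, Finset.univ_unique, Finset.sum_singleton]
    rw [← Real.rpow_mul (ha _), mul_one_div_cancel hr.ne', Real.rpow_one]
    congr 1
  | succ n ih =>
    rw [bhNest, he 0, bh_sum_cons]
    congr 1
    refine Finset.sum_congr rfl fun i _ => ?_
    rw [ih _ (fun j => he _) _ (fun v => ha _), ← Real.rpow_mul
      (Finset.sum_nonneg fun i _ => Real.rpow_nonneg (ha _) _), one_div_mul_cancel hr.ne',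
      Real.rpow_one]

/-- triangle inequality in finite ℓ^q -/
lemma bh_mink {ι κ : Type*} [Fintype ι] [Fintype κ] (q : ℝ) (hq : 1 ≤ q) (f : κ → ι → ℝ)
    (hf : ∀ k i, 0 ≤ f k i) :
    (∑ i, (∑ k, f k i) ^ q) ^ (1 / q) ≤ ∑ k, (∑ i, f k i ^ q) ^ (1 / q) := by
  classical
  have : ∀ s : Finset κ, (∑ i, (∑ k ∈ s, f k i) ^ q) ^ (1 / q) ≤
      ∑ k ∈ s, (∑ i, f k i ^ q) ^ (1 / q) := by
    intro s
    induction s using Finset.induction_on with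
    | empty =>
      simp only [Finset.sum_empty]
      rw [Real.zero_rpow (by positivity)]
      simp only [Finset.sum_const_zero]
      rw [Real.zero_rpow (by positivity)]
    | insert k s hk ih =>
      simp only [Finset.sum_insert hk]
      refine (Real.Lp_add_le_of_nonneg Finset.univ hq (fun i _ => hf k i)
        (fun i _ => Finset.sum_nonneg fun k _ => hf k i)).trans ?_
      gcongr
  exact this _

lemma bhNest_mink {N : ℕ} (p : ℝ) (hp : 0 < p) (hp2 : p ≤ 2) (n : ℕ) (k : Fin (n+1))
    (a : (Fin (n+1) → Fin N) → ℝ) (ha : ∀ v, 0 ≤ a v) :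
    bhNest (n+1) (fun j => if j = k then 2 else p) a ≤
      (∑ v : Fin n → Fin N, (∑ i, a (Fin.insertNth k i v) ^ 2) ^ (p / 2)) ^ (1 / p) := by
  induction n with
  | zero =>
    have hk : k = 0 := Fin.eq_zero k
    subst hk
    simp only [bhNest, Finset.univ_unique, Finset.sum_singleton, if_true, Fin.insertNth_zero]
    rw [← Real.rpow_mul (Finset.sum_nonneg fun i _ => sq_nonneg _)]
    have : p / 2 * (1 / p) = 1 / 2 := by field_simp
    rw [this]
    apply le_of_eq
    congr 1
    refine Finset.sum_congr rfl fun i _ => ?_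
    rw [Real.rpow_two]
    congr 3
    
  | succ n ih =>
    rcases Fin.eq_zero_or_eq_succ k with rfl | ⟨k, rfl⟩
    · rw [bhNest]
      have h1 : ∀ i, bhNest (n+1) (fun j : Fin (n+1) => if j.succ = 0 then (2:ℝ) else p)
          (fun v => a (Fin.cons i v)) = (∑ v : Fin (n+1) → Fin N, a (Fin.cons i v) ^ p) ^ (1/p) :=
        fun i => bhNest_const p hp _ _ (fun j => by simp) _ (fun v => ha _)
      simp only [h1, if_true, Fin.insertNth_zero]
      have h2 := bh_mink (2 / p) (by rw [le_div_iff₀ hp]; linarith)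
        (fun (v : Fin (n+1) → Fin N) i => a (Fin.cons i v) ^ p)
        (fun v i => Real.rpow_nonneg (ha _) _)
      have h3 : ∀ (v : Fin (n+1) → Fin N) i, (a (Fin.cons i v) ^ p) ^ (2 / p) =
          a (Fin.cons i v) ^ 2 := by
        intro v i
        rw [← Real.rpow_mul (ha _), mul_div_cancel₀ _ hp.ne', Real.rpow_two]
      simp only [h3, one_div_div] at h2
      have h4 : ∀ i, ((∑ v : Fin (n+1) → Fin N, a (Fin.cons i v) ^ p) ^ (1/p)) ^ (2:ℝ) =
          (∑ v : Fin (n+1) → Fin N, a (Fin.cons i v) ^ p) ^ (2/p) := by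
        intro i
        rw [← Real.rpow_mul (Finset.sum_nonneg fun v _ => Real.rpow_nonneg (ha _) _)]
        congr 1; ring
      simp only [h4]
      have h5 : 0 ≤ ∑ i, (∑ v : Fin (n+1) → Fin N, a (Fin.cons i v) ^ p) ^ (2/p) :=
        Finset.sum_nonneg fun i _ => Real.rpow_nonneg
          (Finset.sum_nonneg fun v _ => Real.rpow_nonneg (ha _) _) _
      have h6 := Real.rpow_le_rpow (Real.rpow_nonneg h5 _) h2 (by positivity : 0 ≤ 1 / p)
      rw [← Real.rpow_mul h5] at h6
      have : p / 2 * (1 / p) = 1 / 2 := by field_simp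
      rw [this] at h6
      exact h6
    · rw [bhNest, bh_sum_cons]
      have h0 : ¬ ((0 : Fin (n+2)) = k.succ) := (Fin.succ_ne_zero k).symm
      simp only [h0, if_false, Fin.insertNth_succ_cons, Fin.succ_inj]
      have hn : ∀ i, 0 ≤ bhNest (n+1) (fun j => if j = k then (2:ℝ) else p)
          (fun v => a (Fin.cons i v)) := fun i => bhNest_nonneg _ _ _ fun v => ha _
      refine Real.rpow_le_rpow (Finset.sum_nonneg fun i _ => Real.rpow_nonneg (hn i) _) ?_
        (by positivity)
      refine Finset.sum_le_sum fun i _ => ?_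
      refine (Real.rpow_le_rpow (hn i) (ih k (fun v => a (Fin.cons i v)) (fun v => ha _))
        hp.le).trans (le_of_eq ?_)
      rw [← Real.rpow_mul (Finset.sum_nonneg fun i _ => Real.rpow_nonneg
        (Finset.sum_nonneg fun i _ => sq_nonneg _) _), one_div_mul_cancel hp.ne', Real.rpow_one]

lemma bh_blei {N : ℕ} (n : ℕ) (a : (Fin (n+2) → Fin N) → ℝ) (ha : ∀ v, 0 ≤ a v) (B : ℝ)
    (hB : 0 ≤ B) (p r : ℝ) (hp : p = 2 * (n+1) / (n+2)) (hr : r = 2 * (n+2) / (n+3))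
    (h : ∀ k : Fin (n+2), ∑ v : Fin (n+1) → Fin N,
      (∑ i, a (Fin.insertNth k i v) ^ 2) ^ (p / 2) ≤ B ^ p) :
    ∑ v, a v ^ r ≤ B ^ r := by
  have hp0 : 0 < p := by rw [hp]; positivity
  have hr0 : 0 < r := by rw [hr]; positivity
  have hp2 : p ≤ 2 := by
    rw [hp, div_le_iff₀ (by positivity)]; linarith
  have h1 := bhNest_holder (fun _ : Fin (n+2) => 1 / ((n:ℝ)+2)) (fun _ => by positivity)
    (by simp; field_simp) (n+2) (fun k j => if j = k then 2 else p)
    (fun k j => by split_ifs <;> linarith) (fun _ => r) (fun _ => hr0)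
    (fun j => by
      have : ∀ k : Fin (n+2), 1 / ((n:ℝ)+2) / (if j = k then 2 else p) =
          1 / ((n:ℝ)+2) / p + if j = k then 1 / ((n:ℝ)+2) / 2 - 1 / ((n:ℝ)+2) / p else 0 := by
        intro k; split_ifs <;> ring
      simp only [this, Finset.sum_add_distrib, Finset.sum_const, Finset.sum_ite_eq,
        Finset.mem_univ, if_true, Finset.card_univ, Fintype.card_fin, nsmul_eq_mul]
      rw [hp, hr]; push_cast
      field_simp; ring) a ha
  rw [bhNest_const r hr0 _ _ (fun _ => rfl) a ha] at h1
  have h2 : ∀ k : Fin (n+2), bhNest (n+2) (fun j => if j = k then 2 else p) a ≤ B := by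
    intro k
    refine (bhNest_mink p hp0 hp2 (n+1) k a ha).trans ?_
    refine (Real.rpow_le_rpow (Finset.sum_nonneg fun i _ => Real.rpow_nonneg
        (Finset.sum_nonneg fun i _ => sq_nonneg _) _) (h k) (by positivity)).trans (le_of_eq ?_)
    rw [← Real.rpow_mul hB, mul_one_div_cancel hp0.ne', Real.rpow_one]
  have h3 : (∑ v, a v ^ r) ^ (1 / r) ≤ B := by
    refine h1.trans ?_
    refine (Finset.prod_le_prod (fun k _ => Real.rpow_nonneg (bhNest_nonneg _ _ _ ha) _)
      (fun k _ => Real.rpow_le_rpow (bhNest_nonneg _ _ _ ha) (h2 k) (by positivity))).trans ?_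
    rw [← Real.rpow_sum_of_nonneg hB (fun _ _ => by positivity)]
    apply le_of_eq
    conv_rhs => rw [← Real.rpow_one B]
    congr 1
    simp; field_simp
  have hS : 0 ≤ ∑ v, a v ^ r := Finset.sum_nonneg fun v _ => Real.rpow_nonneg (ha v) _
  have h4 := Real.rpow_le_rpow (Real.rpow_nonneg hS _) h3 hr0.le
  rwa [← Real.rpow_mul hS, one_div_mul_cancel hr0.ne', Real.rpow_one] at h4

lemma bh_pow2 (W c d : ℂ) (h : 1 + W + W^2 + W^3 + W^4 = 0) :
   (c+d)^2 + (c*W+d*W^4)^2+(c*W^2+d*W^3)^2+(c*W^3+d*W^2)^2+(c*W^4+d*W)^2 = 10*(c*d) := by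
  grind
lemma bh_pow3 (W c d : ℂ) (h : 1 + W + W^2 + W^3 + W^4 = 0) :
   (c+d)^3 + (c*W+d*W^4)^3+(c*W^2+d*W^3)^3+(c*W^3+d*W^2)^3+(c*W^4+d*W)^3 = 0 := by
  grind
lemma bh_pow4 (W c d : ℂ) (h : 1 + W + W^2 + W^3 + W^4 = 0) :
   (c+d)^4 + (c*W+d*W^4)^4+(c*W^2+d*W^3)^4+(c*W^3+d*W^2)^4+(c*W^4+d*W)^4 = 30*(c*d)^2 := by
  grind

lemma bh_log_le (x : ℝ) (hx : 0 < x) :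
    log x ≤ -(109/100) + 39/29*x - 183/725*x^2 + 8/435*x^3 := by
  have hl2 := Real.log_two_lt_d9
  have hl1 : log (5/4) ≤ 0.2233 := by
    have h1 : 3 * log (5/4) = log 2 + log (125/128) := by
      rw [← Real.log_mul (by norm_num) (by norm_num), show (3:ℝ) = ((3:ℕ):ℝ) by norm_num,
        ← Real.log_pow]; norm_num
    have h2 := Real.log_le_sub_one_of_pos (show (0:ℝ) < 125/128 by norm_num)
    linarith
  have hl5 : log 5 ≤ 1.6096 := by
    have h1 : log 5 = 2 * log 2 + log (5/4) := by
      rw [show (2:ℝ) * log 2 = ((2:ℕ):ℝ) * log 2 by norm_num, ← Real.log_pow,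
        ← Real.log_mul (by norm_num) (by norm_num)]; norm_num
    linarith
  set g : ℝ → ℝ := fun x => -(109/100) + 39/29*x - 183/725*x^2 + 8/435*x^3 - log x with hg
  have hd : ∀ y, 0 < y → HasDerivAt g (8/145*(y-5/4)*(y-29/10)*(y-5)/y) y := by
    intro y hy
    have h := (((((hasDerivAt_id y).const_mul (39/29:ℝ)).const_add (-(109/100):ℝ)).sub
      ((hasDerivAt_pow 2 y).const_mul (183/725:ℝ))).add
      ((hasDerivAt_pow 3 y).const_mul (8/435:ℝ))).sub (Real.hasDerivAt_log hy.ne')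
    refine h.congr_deriv ?_
    field_simp
    ring
  have hc : ∀ y, 0 < y → ContinuousAt g y := fun y hy => (hd y hy).continuousAt
  have mono : ∀ a b : ℝ, 0 < a → a ≤ b →
      (∀ y, a < y → y < b → 0 ≤ (y-5/4)*(y-29/10)*(y-5)) → g a ≤ g b := by
    intro a b ha hab h
    refine monotoneOn_of_deriv_nonneg (convex_Icc a b)
      (fun y hy => (hc y (ha.trans_le hy.1)).continuousWithinAt)
      (fun y hy => ?_) (fun y hy => ?_) (Set.left_mem_Icc.2 hab) (Set.right_mem_Icc.2 hab) hab
    · rw [interior_Icc] at hy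
      exact (hd y (ha.trans hy.1)).differentiableAt.differentiableWithinAt
    · rw [interior_Icc] at hy
      rw [(hd y (ha.trans hy.1)).deriv]
      have := h y hy.1 hy.2
      apply div_nonneg _ (ha.trans hy.1).le
      linarith
  have anti : ∀ a b : ℝ, 0 < a → a ≤ b →
      (∀ y, a < y → y < b → (y-5/4)*(y-29/10)*(y-5) ≤ 0) → g b ≤ g a := by
    intro a b ha hab h
    refine antitoneOn_of_deriv_nonpos (convex_Icc a b)
      (fun y hy => (hc y (ha.trans_le hy.1)).continuousWithinAt)
      (fun y hy => ?_) (fun y hy => ?_) (Set.left_mem_Icc.2 hab) (Set.right_mem_Icc.2 hab) hab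
    · rw [interior_Icc] at hy
      exact (hd y (ha.trans hy.1)).differentiableAt.differentiableWithinAt
    · rw [interior_Icc] at hy
      rw [(hd y (ha.trans hy.1)).deriv]
      have := h y hy.1 hy.2
      apply div_nonpos_of_nonpos_of_nonneg _ (ha.trans hy.1).le
      linarith
  have g1 : 0 ≤ g (5/4) := by simp only [hg]; norm_num at hl1 ⊢; linarith
  have g2 : 0 ≤ g 5 := by simp only [hg]; norm_num at hl5 ⊢; linarith
  have : 0 ≤ g x := by
    rcases le_total x (5/4) with h | h
    · refine g1.trans (anti x _ hx h fun y h1 h2 => ?_)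
      exact mul_nonpos_of_nonneg_of_nonpos (mul_nonneg_of_nonpos_of_nonpos (by linarith) (by linarith)) (by linarith)
    rcases le_total x (29/10) with hb2 | hb2
    · refine g1.trans (mono _ x (by norm_num) h fun y h1 h2 => ?_)
      exact mul_nonneg_of_nonpos_of_nonpos (mul_nonpos_of_nonneg_of_nonpos (by linarith) (by linarith)) (by linarith)
    rcases le_total x 5 with hc2 | hc2
    · refine g2.trans (anti x _ hx hc2 fun y h1 h2 => ?_)
      exact mul_nonpos_of_nonneg_of_nonpos (mul_nonneg (by linarith) (by linarith)) (by linarith)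
    · refine g2.trans (mono _ x (by norm_num) hc2 fun y h1 h2 => ?_)
      exact mul_nonneg (mul_nonneg (by linarith) (by linarith)) (by linarith)
  simp only [hg] at this
  linarith

noncomputable def bhW : ℂ := Complex.exp (2 * Real.pi * Complex.I / 5)

lemma bhW_prim : IsPrimitiveRoot bhW 5 := by
  have := Complex.isPrimitiveRoot_exp 5 (by norm_num)
  simpa [bhW] using this

lemma bhW_sum : 1 + bhW + bhW^2 + bhW^3 + bhW^4 = 0 := by
  have := bhW_prim.geom_sum_eq_zero (by norm_num)
  simpa [Finset.sum_range_succ] using this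

lemma bhW_norm : ‖bhW‖ = 1 := bhW_prim.norm'_eq_one (by norm_num)

noncomputable def bhX {N : ℕ} (a : Fin N → ℂ) (z : Fin N → Fin 5) : ℝ :=
  ‖∑ i, a i * bhW ^ (z i : ℕ)‖ ^ 2

lemma bhX_nonneg {N : ℕ} (a : Fin N → ℂ) (z : Fin N → Fin 5) : 0 ≤ bhX a z := sq_nonneg _

lemma bh_conj (j : Fin 5) : (starRingEnd ℂ) (bhW ^ (j : ℕ)) = bhW ^ (4 * (j : ℕ)) := by
  have h1 : bhW ^ (j:ℕ) * (starRingEnd ℂ) (bhW ^ (j : ℕ)) = 1 := by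
    rw [Complex.mul_conj, Complex.normSq_eq_norm_sq, norm_pow, bhW_norm]; simp
  have h2 : bhW ^ (j:ℕ) * bhW ^ (4 * (j : ℕ)) = 1 := by
    rw [← pow_add, show (j:ℕ) + 4 * j = 5 * j by ring, pow_mul, bhW_prim.pow_eq_one, one_pow]
  have h3 : bhW ^ (j:ℕ) ≠ 0 := left_ne_zero_of_mul_eq_one h1
  exact mul_left_cancel₀ h3 (h1.trans h2.symm)

/-- one step: the real numbers `y j` with `‖a W^j + w‖^2 = u + ρ + y j` -/
lemma bh_step (a w : ℂ) : ∃ y : Fin 5 → ℝ,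
    (∀ j : Fin 5, ‖a * bhW ^ (j : ℕ) + w‖ ^ 2 = ‖w‖^2 + ‖a‖^2 + y j) ∧
    ∑ j, y j = 0 ∧ ∑ j, y j ^ 2 = 10 * (‖w‖^2 * ‖a‖^2) ∧ ∑ j, y j ^ 3 = 0 ∧
    ∑ j, y j ^ 4 = 30 * (‖w‖^2 * ‖a‖^2) ^ 2 := by
  set c := a * (starRingEnd ℂ) w with hc
  set d := w * (starRingEnd ℂ) a with hd
  have hcd : c * d = ((‖w‖^2 * ‖a‖^2 : ℝ) : ℂ) := by
    have h1 := Complex.mul_conj a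
    have h2 := Complex.mul_conj w
    rw [Complex.normSq_eq_norm_sq] at h1 h2
    push_cast at h1 h2 ⊢
    rw [← h1, ← h2, hc, hd]; ring
  set y : Fin 5 → ℝ := fun j => ‖a * bhW ^ (j : ℕ) + w‖ ^ 2 - ‖w‖^2 - ‖a‖^2 with hy
  have hyc : ∀ j, (y j : ℂ) = c * bhW ^ (j : ℕ) + d * bhW ^ (4 * (j:ℕ)) := by
    intro j
    have h1 := Complex.mul_conj a
    have h2 := Complex.mul_conj w
    have h3 := Complex.mul_conj (a * bhW ^ (j : ℕ) + w)
    rw [Complex.normSq_eq_norm_sq] at h1 h2 h3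
    simp only [hy]
    push_cast at h1 h2 h3 ⊢
    rw [← h1, ← h2, ← h3, map_add, map_mul, bh_conj, hc, hd]
    have h2 : bhW ^ (j:ℕ) * bhW ^ (4 * (j : ℕ)) = 1 := by
      rw [← pow_add, show (j:ℕ) + 4 * j = 5 * j by ring, pow_mul, bhW_prim.pow_eq_one, one_pow]
    linear_combination (a * (starRingEnd ℂ) a) * h2
  have h5 := bhW_prim.pow_eq_one
  have e8 : bhW ^ 8 = bhW ^ 3 := by linear_combination bhW ^ 3 * h5
  have e12 : bhW ^ 12 = bhW ^ 2 := by linear_combination (bhW ^ 7 + bhW ^ 2) * h5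
  have e16 : bhW ^ 16 = bhW := by linear_combination (bhW ^ 11 + bhW ^ 6 + bhW) * h5
  have y0 : (y 0 : ℂ) = c + d := by rw [hyc]; simp
  have y1 : (y 1 : ℂ) = c * bhW + d * bhW ^ 4 := by rw [hyc]; simp
  have y2 : (y 2 : ℂ) = c * bhW ^ 2 + d * bhW ^ 3 := by rw [hyc, ← e8]; norm_num
  have y3 : (y 3 : ℂ) = c * bhW ^ 3 + d * bhW ^ 2 := by
    rw [hyc, ← e12]
    simp
  have y4 : (y 4 : ℂ) = c * bhW ^ 4 + d * bhW := by
    rw [hyc]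
    simp [e16]
  refine ⟨y, fun j => by simp only [hy]; ring, ?_, ?_, ?_, ?_⟩
  · rw [← Complex.ofReal_inj, Fin.sum_univ_five]; push_cast
    rw [y0, y1, y2, y3, y4]
    linear_combination (c + d) * bhW_sum
  · rw [← Complex.ofReal_inj, Fin.sum_univ_five]; push_cast
    rw [y0, y1, y2, y3, y4, bh_pow2 _ _ _ bhW_sum, hcd]; push_cast; ring
  · rw [← Complex.ofReal_inj, Fin.sum_univ_five]; push_cast
    rw [y0, y1, y2, y3, y4, bh_pow3 _ _ _ bhW_sum]
  · rw [← Complex.ofReal_inj, Fin.sum_univ_five]; push_cast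
    rw [y0, y1, y2, y3, y4, bh_pow4 _ _ _ bhW_sum, hcd]; push_cast; ring

lemma bh_step_mom (a w : ℂ) (u ρ : ℝ) (hu : u = ‖w‖^2) (hρ : ρ = ‖a‖^2) :
    ∑ j : Fin 5, ‖a * bhW ^ (j : ℕ) + w‖ ^ 2 = 5 * (u + ρ) ∧
    ∑ j : Fin 5, (‖a * bhW ^ (j : ℕ) + w‖ ^ 2) ^ 2 = 5 * (u^2 + 4*u*ρ + ρ^2) ∧
    ∑ j : Fin 5, (‖a * bhW ^ (j : ℕ) + w‖ ^ 2) ^ 3 = 5 * (u^3 + 9*u^2*ρ + 9*u*ρ^2 + ρ^3) ∧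
    ∑ j : Fin 5, (‖a * bhW ^ (j : ℕ) + w‖ ^ 2) ^ 4 =
      5 * (u^4 + 16*u^3*ρ + 36*u^2*ρ^2 + 16*u*ρ^3 + ρ^4) := by
  obtain ⟨y, hy, h1, h2, h3, h4⟩ := bh_step a w
  rw [← hu, ← hρ] at h2 h4
  simp only [hy, ← hu, ← hρ]
  rw [Fin.sum_univ_five] at h1 h2 h3 h4
  simp only [Fin.sum_univ_five]
  refine ⟨?_, ?_, ?_, ?_⟩
  · linear_combination h1
  · linear_combination 2*(u+ρ)*h1 + h2
  · linear_combination 3*(u+ρ)^2*h1 + 3*(u+ρ)*h2 + h3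
  · linear_combination 4*(u+ρ)^3*h1 + 6*(u+ρ)^2*h2 + 4*(u+ρ)*h3 + h4

lemma bh_sum_cons5 {N : ℕ} (f : (Fin (N+1) → Fin 5) → ℝ) :
    ∑ v, f v = ∑ v : Fin N → Fin 5, ∑ i, f (Fin.cons i v) := by
  rw [Finset.sum_comm, ← Fintype.sum_prod_type']
  exact (Equiv.sum_comp (Fin.consEquiv (fun _ => Fin 5)) f).symm

lemma bh_mom {N : ℕ} (a : Fin N → ℂ) (σ s t q : ℝ) (hσ : σ = ∑ i, ‖a i‖^2)
    (hs : s = ∑ i, (‖a i‖^2)^2) (ht : t = ∑ i, (‖a i‖^2)^3) (hq : q = ∑ i, (‖a i‖^2)^4) :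
    ∑ z, bhX a z = 5^N * σ ∧
    ∑ z, bhX a z ^ 2 = 5^N * (2*σ^2 - s) ∧
    ∑ z, bhX a z ^ 3 = 5^N * (6*σ^3 - 9*σ*s + 4*t) ∧
    ∑ z, bhX a z ^ 4 = 5^N * (24*σ^4 - 72*σ^2*s + 18*s^2 + 64*σ*t - 33*q) := by
  induction N generalizing σ s t q with
  | zero =>
    simp at hσ hs ht hq
    subst hσ hs ht hq
    simp [bhX]
  | succ N ih =>
    rw [Fin.sum_univ_succ] at hσ hs ht hq
    set b : Fin N → ℂ := fun i => a i.succ with hb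
    set ρ := ‖a 0‖^2 with hρ
    obtain ⟨i1, i2, i3, i4⟩ := ih b _ _ _ _ rfl rfl rfl rfl
    have hX : ∀ (v : Fin N → Fin 5) (j : Fin 5), bhX a (Fin.cons j v) =
        ‖a 0 * bhW ^ (j:ℕ) + ∑ i, b i * bhW ^ (v i : ℕ)‖ ^ 2 := by
      intro v j
      simp only [bhX, Fin.sum_univ_succ, Fin.cons_zero, Fin.cons_succ, hb]
    have hm := fun v : Fin N → Fin 5 => bh_step_mom (a 0) (∑ i, b i * bhW ^ (v i : ℕ))
      (bhX b v) ρ rfl rfl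
    have h0 : ∑ v : Fin N → Fin 5, (1:ℝ) = 5^N := by simp
    simp only [bh_sum_cons5, hX]
    refine ⟨?_, ?_, ?_, ?_⟩
    · rw [Finset.sum_congr rfl (fun v _ => (hm v).1)]
      simp only [← Finset.mul_sum, Finset.sum_add_distrib, i1, Finset.sum_const, Finset.card_univ,
        Fintype.card_pi, Fintype.card_fin, Finset.prod_const, nsmul_eq_mul]
      rw [hσ]; push_cast; ring
    · rw [Finset.sum_congr rfl (fun v _ => (hm v).2.1)]
      simp only [← Finset.mul_sum, ← Finset.sum_mul, Finset.sum_add_distrib, i1, i2,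
        Finset.sum_const, Finset.card_univ,
        Fintype.card_pi, Fintype.card_fin, Finset.prod_const, nsmul_eq_mul]
      rw [hσ, hs]; push_cast; ring
    · rw [Finset.sum_congr rfl (fun v _ => (hm v).2.2.1)]
      simp only [← Finset.mul_sum, ← Finset.sum_mul, Finset.sum_add_distrib, i1, i2, i3,
        Finset.sum_const, Finset.card_univ,
        Fintype.card_pi, Fintype.card_fin, Finset.prod_const, nsmul_eq_mul]
      rw [hσ, hs, ht]; push_cast; ring
    · rw [Finset.sum_congr rfl (fun v _ => (hm v).2.2.2)]
      simp only [← Finset.mul_sum, ← Finset.sum_mul, Finset.sum_add_distrib, i1, i2, i3, i4,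
        Finset.sum_const, Finset.card_univ,
        Fintype.card_pi, Fintype.card_fin, Finset.prod_const, nsmul_eq_mul]
      rw [hσ, hs, ht, hq]; push_cast; ring

lemma bh_pointwise (ε : ℝ) (h0 : 0 < ε) (h1 : ε < 1) (x : ℝ) (hx : 0 ≤ x) :
    exp (-(53/100) * ε) * (x + ε * (53/100 * x -
      (-(109/100) * x + 39/29*x^2 - 183/725*x^3 + 8/435*x^4))) ≤ x ^ (1 - ε) := by
  rcases hx.eq_or_lt with rfl | hx
  · rw [Real.zero_rpow (by linarith)]; simp
  have hl := bh_log_le x hx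
  have e1 : x ^ (1 - ε) = x * (exp (-(53/100) * ε) * exp (53/100 * ε - ε * log x)) := by
    rw [← Real.exp_add, Real.rpow_def_of_pos hx]
    nth_rewrite 2 [← Real.exp_log hx]
    rw [← Real.exp_add]
    congr 1; ring
  rw [e1]
  have e2 := Real.add_one_le_exp (53/100 * ε - ε * log x)
  have e3 : x + ε * (53/100 * x -
      (-(109/100) * x + 39/29*x^2 - 183/725*x^3 + 8/435*x^4)) ≤
      x * exp (53/100 * ε - ε * log x) := by
    have := mul_le_mul_of_nonneg_left e2 hx.le
    have h3 := mul_le_mul_of_nonneg_left hl (mul_pos h0 hx).le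
    nlinarith
  have := mul_le_mul_of_nonneg_left e3 (Real.exp_pos (-(53/100) * ε)).le
  linarith

lemma bh_khin1 {N : ℕ} (a : Fin N → ℂ) (ha : ∑ i, ‖a i‖^2 = 1) (ε : ℝ) (h0 : 0 < ε) (h1 : ε < 1) :
    exp (-(53/100) * ε) * 5^N ≤ ∑ z, bhX a z ^ (1 - ε) := by
  obtain ⟨m1, m2, m3, m4⟩ := bh_mom a _ _ _ _ rfl rfl rfl rfl
  rw [ha] at m1 m2 m3 m4
  set s := ∑ i, (‖a i‖^2)^2 with hs
  set t := ∑ i, (‖a i‖^2)^3 with ht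
  set q := ∑ i, (‖a i‖^2)^4 with hq
  have hs0 : 0 ≤ s := Finset.sum_nonneg fun i _ => by positivity
  have hs1 : s ≤ 1 := by
    rw [← ha]
    refine Finset.sum_le_sum fun i _ => ?_
    have : ‖a i‖^2 ≤ 1 := by
      rw [← ha]; exact Finset.single_le_sum (f := fun i => ‖a i‖^2) (fun i _ => sq_nonneg _) (Finset.mem_univ i)
    nlinarith [sq_nonneg ‖a i‖]
  have hstq : -(66/1000) * s + 168/1000 * t - 606/1000 * q ≤ 0 := by
    rw [hs, ht, hq, Finset.mul_sum, Finset.mul_sum, Finset.mul_sum, ← Finset.sum_add_distrib,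
      ← Finset.sum_sub_distrib]
    refine Finset.sum_nonpos fun i _ => ?_
    generalize ‖a i‖^2 = x
    nlinarith [sq_nonneg (x * (x - 1/7)), sq_nonneg (x^2), sq_nonneg x]
  have ht0 : 0 ≤ t := Finset.sum_nonneg fun i _ => by positivity
  have hq0 : 0 ≤ q := Finset.sum_nonneg fun i _ => by positivity
  have key : ∑ z, (exp (-(53/100) * ε) * (bhX a z + ε * (53/100 * bhX a z -
      (-(109/100) * bhX a z + 39/29*bhX a z^2 - 183/725*bhX a z^3 + 8/435*bhX a z^4)))) =
      exp (-(53/100) * ε) * (5^N * (1 + ε * (53/100 - (-(109/100) + 39/29 * (2 - s) - 183/725 *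
        (6 - 9*s + 4*t) + 8/435 * (24 - 72*s+18*s^2+64*t-33*q))))) := by
    simp only [← Finset.mul_sum, Finset.sum_add_distrib, Finset.sum_sub_distrib, m1, m2, m3, m4]
    ring
  refine le_trans ?_ ((le_of_eq key.symm).trans
    (Finset.sum_le_sum fun z _ => bh_pointwise ε h0 h1 _ (bhX_nonneg a z)))
  refine mul_le_mul_of_nonneg_left ?_ (Real.exp_pos _).le
  have h5 : (0:ℝ) < 5^N := by positivity
  have h6 : 0 ≤ 53/100 - (-(109/100) + 39/29 * (2 - s) - 183/725 *
        (6 - 9*s + 4*t) + 8/435 * (24 - 72*s+18*s^2+64*t-33*q)) := by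
    nlinarith
  have h7 := mul_nonneg h0.le h6
  nlinarith

lemma bh_khin {N : ℕ} (a : Fin N → ℂ) (ε : ℝ) (h0 : 0 < ε) (h1 : ε < 1) :
    5^N * (∑ i, ‖a i‖^2) ^ (1 - ε) ≤ exp (53/100 * ε) * ∑ z, bhX a z ^ (1 - ε) := by
  set σ := ∑ i, ‖a i‖^2 with hσ
  have hσ0 : 0 ≤ σ := Finset.sum_nonneg fun i _ => sq_nonneg _
  have hr : 0 ≤ exp (53/100 * ε) * ∑ z, bhX a z ^ (1 - ε) :=
    mul_nonneg (Real.exp_pos _).le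
      (Finset.sum_nonneg fun z _ => Real.rpow_nonneg (bhX_nonneg a z) _)
  rcases hσ0.eq_or_lt with h | h
  · rw [← h, Real.zero_rpow (by linarith), mul_zero]; exact hr
  set c : ℝ := √σ with hc
  have hc0 : 0 < c := Real.sqrt_pos.2 h
  have hc2 : c^2 = σ := Real.sq_sqrt hσ0
  have hk := bh_khin1 (fun i => a i / c) (by
    simp only [norm_div, div_pow, Complex.norm_real, Real.norm_eq_abs, sq_abs, hc2]
    rw [← Finset.sum_div, ← hσ, div_self h.ne']) ε h0 h1
  have hX : ∀ z, bhX (fun i => a i / c) z = bhX a z / σ := by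
    intro z
    simp only [bhX, div_mul_eq_mul_div]
    rw [← Finset.sum_div, norm_div, div_pow, Complex.norm_real, Real.norm_eq_abs, sq_abs, hc2]
  simp only [hX] at hk
  have h2 : ∀ z, (bhX a z / σ) ^ (1 - ε) = bhX a z ^ (1 - ε) / σ ^ (1 - ε) := fun z =>
    Real.div_rpow (bhX_nonneg a z) hσ0 _
  simp only [h2] at hk
  rw [← Finset.sum_div, le_div_iff₀ (Real.rpow_pos_of_pos h _)] at hk
  have h3 := mul_le_mul_of_nonneg_left hk (Real.exp_pos (53/100 * ε)).le
  have h4 : exp (53/100 * ε) * exp (-(53/100) * ε) = 1 := by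
    rw [← Real.exp_add]; simp
  calc 5^N * σ ^ (1 - ε) = (exp (53/100 * ε) * exp (-(53/100) * ε)) * (5^N * σ ^ (1 - ε)) := by
        rw [h4, one_mul]
    _ = exp (53/100 * ε) * (exp (-(53/100) * ε) * 5 ^ N * σ ^ (1 - ε)) := by ring
    _ ≤ _ := h3

noncomputable def bhForm {N n : ℕ} (a : (Fin n → Fin N) → ℂ) (z : Fin n → Fin N → ℂ) : ℂ :=
  ∑ v, a v * ∏ j, z j (v j)

lemma bhForm_insert {N n : ℕ} (a : (Fin (n+1) → Fin N) → ℂ) (k : Fin (n+1)) (w : Fin N → ℂ)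
    (z : Fin n → Fin N → ℂ) :
    bhForm (fun v => ∑ i, a (Fin.insertNth k i v) * w i) z =
      bhForm a (Fin.insertNth (α := fun _ => Fin N → ℂ) k w z) := by
  unfold bhForm
  rw [← Equiv.sum_comp (Fin.insertNthEquiv (fun _ => Fin N) k), Fintype.sum_prod_type,
    Finset.sum_comm]
  refine Finset.sum_congr rfl fun v _ => ?_
  rw [Finset.sum_mul]
  refine Finset.sum_congr rfl fun i _ => ?_
  simp only [Fin.insertNthEquiv_apply, Fin.prod_univ_succAbove _ k, Fin.insertNth_apply_same,
    Fin.insertNth_apply_succAbove]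
  rw [show (Fin.insertNthEquiv (fun _ => Fin N) k) (i, v) = Fin.insertNth k i v from rfl]
  ring

lemma bh_main {N : ℕ} (n : ℕ) (a : (Fin (n+1) → Fin N) → ℂ) (M : ℝ) (hM : 0 ≤ M)
    (h : ∀ z : Fin (n+1) → Fin N → ℂ, (∀ j i, ‖z j i‖ ≤ 1) → ‖bhForm a z‖ ≤ M) :
    ∑ v, ‖a v‖ ^ (2 * ((n:ℝ)+1) / (n+2)) ≤
      (exp (53/200 * ∑ i ∈ Finset.range n, 1 / ((i:ℝ)+1)) * M) ^ (2 * ((n:ℝ)+1) / (n+2)) := by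
  induction n with
  | zero =>
    simp only [Nat.cast_zero, zero_add, Finset.range_zero, Finset.sum_empty, mul_zero,
      Real.exp_zero, one_mul, mul_one]
    rw [show (2:ℝ)/2 = 1 by norm_num]
    simp only [Real.rpow_one]
    set z : Fin 1 → Fin N → ℂ := fun _ i =>
      (starRingEnd ℂ) (a (fun _ => i)) / (‖a (fun _ => i)‖ : ℂ) with hz
    have h1 := h z (by
      intro j i
      simp only [hz, norm_div, RCLike.norm_conj, Complex.norm_real, norm_norm]
      exact div_self_le_one _)
    have h2 : bhForm a z = ((∑ v, ‖a v‖ : ℝ) : ℂ) := by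
      unfold bhForm
      push_cast
      refine Finset.sum_congr rfl fun v _ => ?_
      have hv : (fun _ => v 0) = v := by
        funext j; rw [Fin.eq_zero j]
      simp only [hz]
      rw [Fin.prod_univ_one, hv, ← mul_div_assoc, Complex.mul_conj, Complex.normSq_eq_norm_sq]
      by_cases h0 : ‖a v‖ = 0
      · rw [h0]; simp
      · have : (‖a v‖ : ℂ) ≠ 0 := by exact_mod_cast h0
        push_cast
        field_simp
    rw [h2, Complex.norm_real] at h1
    exact (le_abs_self _).trans h1
  | succ n ih =>
    set p : ℝ := 2 * ((n:ℝ)+1) / (n+2) with hp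
    set C : ℝ := exp (53/200 * ∑ i ∈ Finset.range n, 1 / ((i:ℝ)+1)) with hC
    have hC0 : 0 < C := Real.exp_pos _
    have hp0 : 0 < p := by rw [hp]; positivity
    set ε : ℝ := 1 / ((n:ℝ)+2) with hε
    have hε0 : 0 < ε := by positivity
    have hε1 : ε < 1 := by
      rw [hε, div_lt_one (by positivity)]
      have : (0:ℝ) ≤ n := Nat.cast_nonneg n
      linarith
    have hpε : p / 2 = 1 - ε := by rw [hp, hε]; field_simp; ring
    have hsplit : exp (53/200 * ∑ i ∈ Finset.range (n+1), 1 / ((i:ℝ)+1)) * M =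
        exp (53/200 * (1 / ((n:ℝ)+1))) * C * M := by
      rw [Finset.sum_range_succ, hC, ← Real.exp_add]
      congr 2; ring
    rw [hsplit]
    refine bh_blei n (fun v => ‖a v‖) (fun v => norm_nonneg _) _ (by positivity) p _ hp
      (by push_cast; ring) ?_
    intro k
    have h5 : (0:ℝ) < 5^N := by positivity
    refine le_of_mul_le_mul_left ?_ h5
    rw [Finset.mul_sum, hpε]
    have s1 : ∀ v : Fin (n+1) → Fin N, 5^N * (∑ i, ‖a (Fin.insertNth k i v)‖^2) ^ (1 - ε) ≤
        exp (53/100 * ε) * ∑ z, bhX (fun i => a (Fin.insertNth k i v)) z ^ (1 - ε) :=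
      fun v => bh_khin _ ε hε0 hε1
    have s2 : ∀ z : Fin N → Fin 5, ∑ v : Fin (n+1) → Fin N,
        bhX (fun i => a (Fin.insertNth k i v)) z ^ (1 - ε) ≤ (C * M) ^ p := by
      intro z
      have h1 := ih (fun v => ∑ i, a (Fin.insertNth k i v) * bhW ^ (z i : ℕ)) (by
        intro y hy
        rw [bhForm_insert a k (fun i => bhW ^ (z i : ℕ)) y]
        refine h _ fun j i => ?_
        refine Fin.succAboveCases k ?_ (fun j => ?_) j
        · simp [bhW_norm]
        · simpa using hy j i)
      refine le_trans (le_of_eq ?_) h1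
      refine Finset.sum_congr rfl fun v _ => ?_
      rw [bhX, ← Real.rpow_two, ← Real.rpow_mul (norm_nonneg _), ← hpε]
      congr 1; ring
    calc _ ≤ ∑ v : Fin (n+1) → Fin N, exp (53/100 * ε) *
          ∑ z, bhX (fun i => a (Fin.insertNth k i v)) z ^ (1 - ε) :=
          Finset.sum_le_sum fun v _ => s1 v
      _ = exp (53/100 * ε) * ∑ z : Fin N → Fin 5, ∑ v : Fin (n+1) → Fin N,
          bhX (fun i => a (Fin.insertNth k i v)) z ^ (1 - ε) := by
          rw [← Finset.mul_sum, Finset.sum_comm]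
      _ ≤ exp (53/100 * ε) * ∑ z : Fin N → Fin 5, (C * M) ^ p :=
          mul_le_mul_of_nonneg_left (Finset.sum_le_sum fun z _ => s2 z) (Real.exp_pos _).le
      _ = 5^N * (exp (53/100 * ε) * (C * M) ^ p) := by
          simp only [Finset.sum_const, Finset.card_univ, Fintype.card_pi, Fintype.card_fin,
            Finset.prod_const, nsmul_eq_mul]
          push_cast; ring
      _ = 5^N * (exp (53/200 * (1 / ((n:ℝ)+1))) * C * M) ^ p := by
          have e1 : (exp (53/200 * (1 / ((n:ℝ)+1))) * C * M) ^ p =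
              exp (53/200 * (1 / ((n:ℝ)+1))) ^ p * (C * M) ^ p := by
            rw [mul_assoc]
            exact Real.mul_rpow (Real.exp_pos _).le (by positivity)
          have e2 : exp (53/200 * (1 / ((n:ℝ)+1))) ^ p = exp (53/100 * ε) := by
            rw [← Real.exp_mul]
            congr 1
            rw [hp, hε]; field_simp; norm_num
          rw [e1, e2]

lemma bh_const (n : ℕ) (hn : 2 ^ 15 ≤ n) :
    exp (53/200 * ∑ i ∈ Finset.range n, 1 / ((i:ℝ)+1)) ≤
      0.99136434217 * (n:ℝ) ^ (0.304975 : ℝ) := by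
  have hn' : (2:ℝ)^15 ≤ n := by exact_mod_cast hn
  have hpos : (0:ℝ) < n := lt_of_lt_of_le (by norm_num) hn'
  have h1 : ∑ i ∈ Finset.range n, 1 / ((i:ℝ)+1) ≤ 1 + log n := by
    have := harmonic_le_one_add_log n
    simpa [harmonic] using this
  have h2 : 15 * log 2 ≤ log n := by
    have := Real.log_le_log (by norm_num) hn'
    rwa [Real.log_pow] at this
  have h3 := Real.log_two_gt_d9
  have h4 : 1 - (0.99136434217:ℝ)⁻¹ ≤ log 0.99136434217 :=
    Real.one_sub_inv_le_log_of_pos (by norm_num)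
  have h5 : (0.99136434217 : ℝ) * (n:ℝ) ^ (0.304975 : ℝ) =
      exp (log 0.99136434217 + log n * 0.304975) := by
    rw [Real.exp_add, Real.exp_log (by norm_num), Real.rpow_def_of_pos hpos]
  rw [h5, Real.exp_le_exp]
  have h6 : (-0.01:ℝ) ≤ 1 - (0.99136434217:ℝ)⁻¹ := by norm_num
  nlinarith

lemma bhForm_U {n N : ℕ} (U : ContinuousMultilinearMap ℂ (fun _ : Fin n => (Fin N → ℂ)) ℂ)
    (z : Fin n → Fin N → ℂ) :
    bhForm (fun i => U (fun k => Pi.single (i k) (1 : ℂ))) z = U z := by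
  have hz : z = fun k => ∑ i, z k i • (Pi.single i (1:ℂ) : Fin N → ℂ) := by
    funext k
    exact pi_eq_sum_univ' (z k) |>.trans (by
      refine Finset.sum_congr rfl fun i _ => ?_
      congr 1)
  conv_rhs => rw [hz]
  rw [ContinuousMultilinearMap.map_sum]
  unfold bhForm
  refine Finset.sum_congr rfl fun v _ => ?_
  rw [ContinuousMultilinearMap.map_smul_univ, smul_eq_mul, mul_comm]

theorem stmt14 (n : ℕ) (hn : 2 ^ 15 < n) (N : ℕ) (hN : 0 < N)
    (U : ContinuousMultilinearMap ℂ (fun _ : Fin n => (Fin N → ℂ)) ℂ) :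
    BHcomplex n N U ≤ 0.99136434217 * ((n : ℝ) - 1) ^ (0.304975 : ℝ) * ‖U‖ := by
  obtain ⟨m, rfl⟩ : ∃ m, n = m + 1 := ⟨n - 1, by omega⟩
  have hm : 2 ^ 15 ≤ m := by omega
  have h1 := bh_main m (fun i => U (fun k => Pi.single (i k) (1 : ℂ))) ‖U‖ (norm_nonneg _) (by
    intro z hz
    rw [bhForm_U]
    refine (U.le_opNorm z).trans ?_
    refine mul_le_of_le_one_right (norm_nonneg _) ?_
    refine Finset.prod_le_one (fun _ _ => norm_nonneg _) fun j _ => ?_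
    exact (pi_norm_le_iff_of_nonneg zero_le_one).2 (hz j))
  have h2 := bh_const m hm
  set C := exp (53/200 * ∑ i ∈ Finset.range m, 1 / ((i:ℝ)+1)) with hC
  have hC0 : 0 < C := Real.exp_pos _
  have e : (((m + 1 : ℕ) : ℝ) - 1) = m := by push_cast; ring
  rw [e]
  refine le_trans ?_ (mul_le_mul_of_nonneg_right h2 (norm_nonneg U))
  unfold BHcomplex
  have er : (2 * ((m + 1 : ℕ) : ℝ)) / (((m + 1 : ℕ) : ℝ) + 1) = 2 * ((m:ℝ)+1) / (m+2) := by
    push_cast; congr 1; ring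
  have er' : (((m + 1 : ℕ) : ℝ) + 1) / (2 * ((m + 1 : ℕ) : ℝ)) = 1 / (2 * ((m:ℝ)+1) / (m+2)) := by
    rw [one_div_div]; push_cast; congr 1; ring
  rw [er, er']
  have hr : 0 < 2 * ((m:ℝ)+1) / (m+2) := by positivity
  refine (Real.rpow_le_rpow (Finset.sum_nonneg fun i _ => Real.rpow_nonneg (norm_nonneg _) _) h1
    (by positivity)).trans (le_of_eq ?_)
  rw [← Real.rpow_mul (by positivity), mul_one_div_cancel hr.ne', Real.rpow_one]
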